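/- arXiv:1706.01281 — 4 statements merged into one kernel-verified Lean document; each statement's English description precedes it below -/
import Mathlib

section
/- Let d ≥ 2, let Ω ⊆ ℝ^N (N ≥ 1) be an open set, let n : Ω → S^{d-1} be measurable and let ρ : (0,∞) → [0,∞) be measurable. Then (with all integrals valued in [0,∞]): ∫_{SO(d)} ∬_{Ω×Ω} ‖F_R(n(x)) − F_R(n(y))‖_{ℝ^d} / |x−y| · ρ(|x−y|) dx dy dμ(R) ≤ (1 + 2/π) ∬_{Ω×Ω} (1/√2)·‖n(x)⊗n(x) − n(y)⊗n(y)‖ / |x−y| · ρ(|x−y|) dx dy, where ‖·‖ on matrices is the Frobenius norm. -/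
/-!
STATEMENT 8: the Euclidean-distance analogue of Lemma 3.1 (used in the first proof of
Proposition 1.9): the SO(d)-average of the mollified Euclidean energies of the liftings
`F_R ∘ n` is at most (1 + 2/π) times the mollified energy of the tensorial map
`x ↦ (1/√2) n(x)⊗n(x)`.
-/

noncomputable section
open MeasureTheory Real Filter
open scoped ENNReal RealInnerProductSpace

instance {m n : Type*} : MeasurableSpace (Matrix m n ℝ) := MeasurableSpace.pi

/-- The special orthogonal group `SO(d)` as matrices. -/
abbrev SOd (d : ℕ) := Matrix.specialOrthogonalGroup (Fin d) ℝ

/-- The last coordinate `⟪x, e_d⟫` of a vector `x ∈ ℝ^d`. -/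
def lastCoord {d : ℕ} (x : EuclideanSpace ℝ (Fin d)) : ℝ :=
  if h : 0 < d then x ⟨d - 1, Nat.sub_lt h Nat.one_pos⟩ else 0

/-- `F : S^{d-1} → S^{d-1}`, `F(x) = x` if `⟪x, e_d⟫ ≥ 0` and `F(x) = -x` otherwise. -/
def Fsym {d : ℕ} (x : EuclideanSpace ℝ (Fin d)) : EuclideanSpace ℝ (Fin d) :=
  if 0 ≤ lastCoord x then x else -x

/-- Action of a matrix on `ℝ^d` (Euclidean space) by matrix-vector multiplication. -/
def rotAct {d : ℕ} (R : Matrix (Fin d) (Fin d) ℝ) (x : EuclideanSpace ℝ (Fin d)) :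
    EuclideanSpace ℝ (Fin d) :=
  (EuclideanSpace.equiv (Fin d) ℝ).symm (R.mulVec (EuclideanSpace.equiv (Fin d) ℝ x))

/-- Action of `R ∈ SO(d)` on `ℝ^d`. -/
def rot {d : ℕ} (R : SOd d) (x : EuclideanSpace ℝ (Fin d)) : EuclideanSpace ℝ (Fin d) :=
  rotAct (R : Matrix (Fin d) (Fin d) ℝ) x

/-- `F_R(x) = R⁻¹ F(Rx)` (for `R ∈ SO(d)`, `R⁻¹ = Rᵀ`). -/
def FR {d : ℕ} (R : SOd d) (x : EuclideanSpace ℝ (Fin d)) : EuclideanSpace ℝ (Fin d) :=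
  rotAct (Matrix.transpose (R : Matrix (Fin d) (Fin d) ℝ)) (Fsym (rot R x))

/-- The Frobenius (Euclidean) norm of a `d × d` real matrix. -/
def frobNorm {d : ℕ} (A : Fin d → Fin d → ℝ) : ℝ := Real.sqrt (∑ i, ∑ j, (A i j) ^ 2)

/-- The tensor (outer) product `v ⊗ w` of two vectors, as a `d × d` matrix. -/
def outer {d : ℕ} (v w : EuclideanSpace ℝ (Fin d)) : Fin d → Fin d → ℝ := fun i j => v i * w j


lemma chord_bound (x : ℝ) (h0 : 0 ≤ x) (h1 : x ≤ π / 2) :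
    x ≤ sin x * (1 + (1 - 2 / π) * x) := by
  have hp3 := Real.pi_gt_three
  have hp4 : π < 3.15 := Real.pi_lt_d2
  have hpi : 2 / π * π = 2 := by field_simp
  obtain ⟨q, hq⟩ : ∃ q, q = 2 / π := ⟨_, rfl⟩
  rw [← hq] at hpi ⊢
  have hq1 : q < 0.67 := by nlinarith
  have hq2 : 0.63 < q := by nlinarith
  rcases le_or_gt x 1 with hx | hx
  · have h := Real.sin_ge_sub_cube h0
    have h2 : x ≤ (x - x ^ 3 / 6) * (1 + (1 - q) * x) := by
      have : 0 ≤ (1 - q) * (1 - x ^ 2 / 6) - x / 6 := by nlinarith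
      nlinarith [mul_nonneg (mul_nonneg h0 h0) this]
    refine h2.trans (mul_le_mul_of_nonneg_right ?_ (by nlinarith))
    linarith
  · obtain ⟨y, hy⟩ : ∃ y, y = π / 2 - x := ⟨_, rfl⟩
    have hxy : x = π / 2 - y := by linarith
    have hc : 1 - y ^ 2 / 2 ≤ sin x := by
      rw [hxy, Real.sin_pi_div_two_sub]; exact Real.one_sub_sq_div_two_le_cos
    have hy0 : 0 ≤ y := by linarith
    have hy1 : y ≤ 0.576 := by linarith
    refine le_trans ?_ (mul_le_mul_of_nonneg_right hc (by nlinarith))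
    have e : (1 - y ^ 2 / 2) * (1 + (1 - q) * x) - x
        = y * (q - π / 4 * y + (1 - q) * y ^ 2 / 2) := by
      rw [hxy]
      linear_combination (-1/2 + y ^ 2 / 4) * hpi
    have : 0 ≤ q - π / 4 * y + (1 - q) * y ^ 2 / 2 := by
      have : 0 ≤ (1 - q) * y ^ 2 / 2 := by
        have : 0 ≤ 1 - q := by linarith
        positivity
      nlinarith
    nlinarith [mul_nonneg hy0 this]

lemma trig_bound (θ : ℝ) (h0 : 0 ≤ θ) (h1 : θ ≤ π) :
    (2 * π - 2 * θ) * (2 * sin (θ / 2)) + 2 * θ * (2 * cos (θ / 2)) ≤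
      2 * π * ((1 + 2 / π) * sin θ) := by
  have hp3 := Real.pi_gt_three
  have ha := chord_bound (θ / 2) (by linarith) (by linarith)
  have hb := chord_bound (π / 2 - θ / 2) (by linarith) (by linarith)
  rw [Real.sin_pi_div_two_sub] at hb
  have hs : sin θ = 2 * sin (θ / 2) * cos (θ / 2) := by
    rw [← Real.sin_two_mul]; ring_nf
  have hs0 : 0 ≤ sin (θ / 2) := Real.sin_nonneg_of_nonneg_of_le_pi (by linarith) (by linarith)
  have hc0 : 0 ≤ cos (θ / 2) := Real.cos_nonneg_of_neg_pi_div_two_le_of_le (by linarith) (by linarith)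
  have h1 := mul_le_mul_of_nonneg_right ha hc0
  have h2 := mul_le_mul_of_nonneg_right hb hs0
  rw [hs]
  have hpi : 2 / π * π = 2 := by field_simp
  generalize 2 / π = q at *
  generalize sin (θ / 2) = s at *
  generalize cos (θ / 2) = c at *
  have e : 8 * (s * (1 + (1 - q) * (θ / 2)) * c + c * (1 + (1 - q) * (π / 2 - θ / 2)) * s)
     = 2 * π * ((1 + q) * (2 * s * c)) := by
    linear_combination (-8 * s * c) * hpi
  linarith

/-- last coordinate of `R x`. -/
def LL {d : ℕ} (R : SOd d) (x : EuclideanSpace ℝ (Fin d)) : ℝ := lastCoord (rot R x)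

lemma rotAct_apply {d : ℕ} (R : Matrix (Fin d) (Fin d) ℝ) (x : EuclideanSpace ℝ (Fin d)) (i : Fin d) :
    rotAct R x i = ∑ j, R i j * x j := by
  simp [rotAct, Matrix.mulVec, dotProduct]

lemma rotAct_mul {d : ℕ} (R S : Matrix (Fin d) (Fin d) ℝ) (x : EuclideanSpace ℝ (Fin d)) :
    rotAct (R * S) x = rotAct R (rotAct S x) := by
  ext i
  simp only [rotAct_apply, Matrix.mul_apply, Finset.mul_sum, Finset.sum_mul]
  rw [Finset.sum_comm]
  simp only [mul_assoc]

lemma rotAct_one {d : ℕ} (x : EuclideanSpace ℝ (Fin d)) :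
    rotAct (1 : Matrix (Fin d) (Fin d) ℝ) x = x := by
  simp [rotAct]

lemma rotAct_neg {d : ℕ} (R : Matrix (Fin d) (Fin d) ℝ) (x : EuclideanSpace ℝ (Fin d)) :
    rotAct R (-x) = - rotAct R x := by
  ext i; simp [rotAct_apply]

lemma SO_transpose_mul {d : ℕ} (R : SOd d) :
    (R : Matrix (Fin d) (Fin d) ℝ).transpose * (R : Matrix (Fin d) (Fin d) ℝ) = 1 := by
  have := R.2
  rw [Matrix.mem_specialOrthogonalGroup_iff, Matrix.mem_orthogonalGroup_iff'] at this
  exact this.1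

lemma SO_mul_transpose {d : ℕ} (R : SOd d) :
    (R : Matrix (Fin d) (Fin d) ℝ) * (R : Matrix (Fin d) (Fin d) ℝ).transpose = 1 := by
  have := R.2
  rw [Matrix.mem_specialOrthogonalGroup_iff, Matrix.mem_orthogonalGroup_iff] at this
  exact this.1

lemma FR_eq {d : ℕ} (R : SOd d) (x : EuclideanSpace ℝ (Fin d)) :
    FR R x = if 0 ≤ LL R x then x else -x := by
  have h : rotAct (R : Matrix (Fin d) (Fin d) ℝ).transpose (rot R x) = x := by
    rw [rot, ← rotAct_mul, SO_transpose_mul, rotAct_one]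
  unfold FR Fsym LL
  split_ifs
  · exact h
  · rw [rotAct_neg, h]

lemma LL_eq {d : ℕ} (hd : 0 < d) (R : SOd d) (x : EuclideanSpace ℝ (Fin d)) :
    LL R x = ∑ j, (R : Matrix (Fin d) (Fin d) ℝ) ⟨d - 1, Nat.sub_lt hd Nat.one_pos⟩ j * x j := by
  simp [LL, lastCoord, hd, rot, rotAct_apply]

lemma LL_add {d : ℕ} (hd : 0 < d) (R : SOd d) (x y : EuclideanSpace ℝ (Fin d)) :
    LL R (x + y) = LL R x + LL R y := by
  simp [LL_eq hd, mul_add, Finset.sum_add_distrib]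

lemma LL_smul {d : ℕ} (hd : 0 < d) (R : SOd d) (c : ℝ) (x : EuclideanSpace ℝ (Fin d)) :
    LL R (c • x) = c * LL R x := by
  simp only [LL_eq hd, Finset.mul_sum]
  refine Finset.sum_congr rfl fun i _ => ?_
  simp; ring

lemma LL_mul {d : ℕ} (R S : SOd d) (x : EuclideanSpace ℝ (Fin d)) :
    LL (R * S) x = LL R (rot S x) := by
  simp [LL, rot, rotAct_mul]

lemma LL_ne {d : ℕ} (hd : 0 < d) (R : SOd d) : ∃ x, LL R x ≠ 0 := by
  refine ⟨rotAct (R : Matrix (Fin d) (Fin d) ℝ).transpose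
    (EuclideanSpace.single ⟨d - 1, Nat.sub_lt hd Nat.one_pos⟩ 1), ?_⟩
  rw [LL, rot, ← rotAct_mul, SO_mul_transpose, rotAct_one]
  simp [lastCoord, hd]

lemma LL_measurable {d : ℕ} (hd : 0 < d) :
    Measurable (fun p : SOd d × EuclideanSpace ℝ (Fin d) => LL p.1 p.2) := by
  simp only [LL_eq hd]
  refine Finset.measurable_sum _ fun j _ => Measurable.mul ?_ ?_
  · exact (measurable_pi_apply j).comp ((measurable_pi_apply (X := fun _ : Fin d => Fin d → ℝ) _).comp
      (measurable_subtype_coe.comp measurable_fst))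
  · fun_prop

lemma FR_measurable {d : ℕ} (hd : 0 < d) :
    Measurable (fun p : SOd d × EuclideanSpace ℝ (Fin d) => FR p.1 p.2) := by
  simp only [FR_eq]
  exact Measurable.ite (measurableSet_le measurable_const (LL_measurable hd))
    measurable_snd measurable_snd.neg

lemma mulRight_measurable {d : ℕ} (R₀ : SOd d) : Measurable (fun R : SOd d => R * R₀) := by
  refine Measurable.subtype_mk ?_
  refine measurable_pi_lambda _ fun i => measurable_pi_lambda _ fun j => ?_
  simp only [Matrix.mul_apply]
  refine Finset.measurable_sum _ fun k _ => Measurable.mul_const ?_ _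
  exact (measurable_pi_apply k).comp ((measurable_pi_apply (X := fun _ : Fin d => Fin d → ℝ) i).comp
      measurable_subtype_coe)

/-- rotation by angle φ in the plane of `u, v`. -/
def rotM {d : ℕ} (u v : EuclideanSpace ℝ (Fin d)) (φ : ℝ) : Matrix (Fin d) (Fin d) ℝ :=
  1 + (cos φ - 1) • (Matrix.vecMulVec u u + Matrix.vecMulVec v v)
    + sin φ • (Matrix.vecMulVec v u - Matrix.vecMulVec u v)

section rotM
variable {d : ℕ} {u v : EuclideanSpace ℝ (Fin d)}

lemma dot_of_inner (u v : EuclideanSpace ℝ (Fin d)) : (u : Fin d → ℝ) ⬝ᵥ v = inner ℝ u v := by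
  simp [PiLp.inner_apply, dotProduct, mul_comm]

lemma rotM_mul (hu : inner ℝ u u = (1:ℝ)) (hv : inner ℝ v v = (1:ℝ)) (huv : inner ℝ u v = (0:ℝ))
    (φ ψ : ℝ) : rotM u v φ * rotM u v ψ = rotM u v (φ + ψ) := by
  have hvu : inner ℝ v u = (0:ℝ) := by rw [real_inner_comm]; exact huv
  rw [← dot_of_inner] at hu hv huv hvu
  unfold rotM
  rw [Real.cos_add, Real.sin_add]
  simp only [mul_add, add_mul, mul_sub, sub_mul, Matrix.smul_mul, Matrix.mul_smul, one_mul, mul_one,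
    Matrix.vecMulVec_mul_vecMulVec, hu, hv, huv, hvu, one_smul, zero_smul, Matrix.vecMulVec_zero, Matrix.zero_vecMulVec,
    smul_zero, smul_add, smul_sub, sub_smul, add_smul]
  module

lemma rotM_zero : rotM u v 0 = 1 := by simp [rotM]

lemma rotM_transpose (φ : ℝ) : (rotM u v φ).transpose = rotM u v (-φ) := by
  ext i j
  simp [rotM, Matrix.vecMulVec_apply, Matrix.one_apply, eq_comm]
  ring_nf

lemma rotM_mem (hu : inner ℝ u u = (1:ℝ)) (hv : inner ℝ v v = (1:ℝ)) (huv : inner ℝ u v = (0:ℝ))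
    (φ : ℝ) : rotM u v φ ∈ Matrix.specialOrthogonalGroup (Fin d) ℝ := by
  have key : ∀ φ, rotM u v φ * (rotM u v φ).transpose = 1 := fun φ => by
    rw [rotM_transpose, rotM_mul hu hv huv, add_neg_cancel, rotM_zero]
  rw [Matrix.mem_specialOrthogonalGroup_iff, Matrix.mem_orthogonalGroup_iff]
  refine ⟨key φ, ?_⟩
  have h1 := congrArg Matrix.det (key (φ / 2))
  rw [Matrix.det_mul, Matrix.det_transpose, ← Matrix.det_mul, rotM_mul hu hv huv] at h1
  simpa using h1

lemma rotM_act (φ : ℝ) (x : EuclideanSpace ℝ (Fin d)) :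
    rotAct (rotM u v φ) x = x + (cos φ - 1) • (inner ℝ u x • u + inner ℝ v x • v)
      + sin φ • (inner ℝ u x • v - inner ℝ v x • u) := by
  rw [← dot_of_inner, ← dot_of_inner]
  ext i
  simp only [rotAct, rotM, Matrix.add_mulVec, Matrix.sub_mulVec, Matrix.smul_mulVec, Matrix.one_mulVec,
    Matrix.vecMulVec_mulVec]
  have e : (EuclideanSpace.equiv (Fin d) ℝ) x = x.ofLp := rfl
  rw [e]
  simp

lemma rotM_act_u (hu : inner ℝ u u = (1:ℝ)) (huv : inner ℝ u v = (0:ℝ)) (φ : ℝ) :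
    rotAct (rotM u v φ) u = cos φ • u + sin φ • v := by
  have hvu : inner ℝ v u = (0:ℝ) := by rw [real_inner_comm]; exact huv
  rw [rotM_act, hu, hvu]; module

lemma rotM_act_v (hv : inner ℝ v v = (1:ℝ)) (huv : inner ℝ u v = (0:ℝ)) (φ : ℝ) :
    rotAct (rotM u v φ) v = cos φ • v - sin φ • u := by
  rw [rotM_act, hv, huv]; module

end rotM

lemma exists_frame {d : ℕ} (hd : 2 ≤ d) (n m : EuclideanSpace ℝ (Fin d)) (hn : ‖n‖ = 1) (hm : ‖m‖ = 1) :
    ∃ (v : EuclideanSpace ℝ (Fin d)) (θ : ℝ), inner ℝ v v = (1:ℝ) ∧ inner ℝ n v = (0:ℝ) ∧ 0 ≤ θ ∧ θ ≤ π ∧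
      m = cos θ • n + sin θ • v := by
  have hnn : inner ℝ n n = (1:ℝ) := by rw [real_inner_self_eq_norm_sq, hn]; norm_num
  have hmm : inner ℝ m m = (1:ℝ) := by rw [real_inner_self_eq_norm_sq, hm]; norm_num
  obtain ⟨c, hc⟩ : ∃ c : ℝ, c = inner ℝ n m := ⟨_, rfl⟩
  have hab : |inner ℝ n m| ≤ (1:ℝ) := by simpa [hn, hm] using abs_real_inner_le_norm n m
  rw [← hc, abs_le] at hab
  have hcos : cos (arccos c) = c := Real.cos_arccos hab.1 hab.2
  have hmn : inner ℝ m n = c := by rw [real_inner_comm, hc]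
  obtain ⟨w, hw⟩ : ∃ w, w = m - c • n := ⟨_, rfl⟩
  have hww : inner ℝ w w = 1 - c ^ 2 := by
    rw [hw]; simp only [inner_sub_left, inner_sub_right, inner_smul_left, inner_smul_right, hnn, hmm, hmn, ← hc]
    simp; ring
  have hnw : inner ℝ n w = (0:ℝ) := by
    rw [hw]; simp only [inner_sub_right, inner_smul_right, hnn, ← hc]; ring
  have hsin : sin (arccos c) = √(1 - c ^ 2) := Real.sin_arccos c
  by_cases h0 : 1 - c ^ 2 = 0
  · have hw0 : w = 0 := by rw [← inner_self_eq_zero (𝕜 := ℝ), hww, h0]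
    have hx : ∃ x : EuclideanSpace ℝ (Fin d), inner ℝ n x = (0:ℝ) ∧ x ≠ 0 := by
      by_contra! hcon
      have hb : (ℝ ∙ n)ᗮ = ⊥ := by
        rw [Submodule.eq_bot_iff]
        intro x hx
        exact hcon x (Submodule.mem_orthogonal_singleton_iff_inner_right.1 hx)
      rw [Submodule.orthogonal_eq_bot_iff] at hb
      have h1 := finrank_span_singleton (K := ℝ) (v := n) (by rintro rfl; simp at hn)
      rw [hb] at h1
      simp at h1
      omega
    obtain ⟨x, hx, hx0⟩ := hx
    refine ⟨‖x‖⁻¹ • x, arccos c, ?_, ?_, arccos_nonneg _, arccos_le_pi _, ?_⟩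
    · have : ‖x‖ ≠ 0 := by simpa using hx0
      rw [inner_smul_left, inner_smul_right, real_inner_self_eq_norm_sq]
      simp; field_simp
    · rw [inner_smul_right, hx, mul_zero]
    · rw [hcos, hsin, h0]
      simp
      rw [← sub_eq_zero, ← hw, hw0]
  · have hpos : 0 < 1 - c ^ 2 := lt_of_le_of_ne (by nlinarith) (Ne.symm h0)
    have hs := Real.sqrt_pos.2 hpos
    refine ⟨(√(1 - c ^ 2))⁻¹ • w, arccos c, ?_, ?_, arccos_nonneg _, arccos_le_pi _, ?_⟩
    · rw [inner_smul_left, inner_smul_right, hww]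
      have := Real.mul_self_sqrt hpos.le
      simp; field_simp; nlinarith
    · rw [inner_smul_right, hnw, mul_zero]
    · rw [hcos, hsin, smul_smul, mul_inv_cancel₀ hs.ne', one_smul, hw]; module

lemma LL_ae_ne {d : ℕ} (hd : 2 ≤ d) (μ : Measure (SOd d)) [IsProbabilityMeasure μ]
    (hμright : ∀ R₀ : SOd d, μ.map (fun R => R * R₀) = μ)
    (n : EuclideanSpace ℝ (Fin d)) (hn : ‖n‖ = 1) : ∀ᵐ R ∂μ, LL R n ≠ 0 := by
  have hd0 : 0 < d := by omega
  have h1 : ∀ᵐ R ∂μ, ∀ᵐ w ∂(volume : Measure (EuclideanSpace ℝ (Fin d))), LL R w ≠ 0 := by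
    refine Eventually.of_forall fun R => ?_
    let f : EuclideanSpace ℝ (Fin d) →ₗ[ℝ] ℝ :=
      { toFun := LL R, map_add' := LL_add hd0 R, map_smul' := fun c x => LL_smul hd0 R c x }
    have hk : LinearMap.ker f ≠ ⊤ := by
      intro h
      obtain ⟨x, hx⟩ := LL_ne hd0 R
      have : x ∈ LinearMap.ker f := by rw [h]; trivial
      exact hx this
    have := Measure.addHaar_submodule (volume : Measure (EuclideanSpace ℝ (Fin d))) _ hk
    rw [ae_iff]
    convert this using 2
    ext x; simp [f]
  have hms : MeasurableSet {p : SOd d × EuclideanSpace ℝ (Fin d) | LL p.1 p.2 ≠ 0} :=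
    (measurableSet_eq_fun (LL_measurable hd0) measurable_const).compl
  rw [Measure.ae_ae_comm hms] at h1
  obtain ⟨w, hw⟩ := h1.exists
  have hw0 : w ≠ 0 := by
    rintro rfl
    obtain ⟨R, hR⟩ := hw.exists
    apply hR
    simp [LL_eq hd0]
  have hwn : ‖w‖ ≠ 0 := by simpa using hw0
  have hm : ‖‖w‖⁻¹ • w‖ = 1 := by rw [norm_smul]; simp [hwn]
  obtain ⟨v, θ, hv, hnv, -, -, h⟩ := exists_frame hd n _ hn hm
  have hnn : inner ℝ n n = (1:ℝ) := by rw [real_inner_self_eq_norm_sq, hn]; norm_num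
  let R₀ : SOd d := ⟨rotM n v θ, rotM_mem hnn hv hnv θ⟩
  have hR0 : rot R₀ n = ‖w‖⁻¹ • w := by
    rw [h]; exact rotM_act_u hnn hnv θ
  have hms2 : MeasurableSet {R : SOd d | LL R n ≠ 0} :=
    (measurableSet_eq_fun ((LL_measurable hd0).comp (measurable_id.prodMk measurable_const))
      measurable_const).compl
  rw [← hμright R₀, ae_map_iff (mulRight_measurable R₀).aemeasurable hms2]
  filter_upwards [hw] with R hR
  rw [LL_mul, hR0, LL_smul hd0]
  exact mul_ne_zero (inv_ne_zero hwn) hR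

/-- profile of the circle average -/
def HH (θ A B ψ : ℝ) : ℝ := if (0 ≤ cos ψ ↔ 0 ≤ cos (ψ + θ)) then A else B

lemma HH_measurable (θ A B : ℝ) : Measurable (HH θ A B) := by
  have m1 : MeasurableSet {ψ : ℝ | 0 ≤ cos ψ} := measurableSet_le measurable_const (by fun_prop)
  have m2 : MeasurableSet {ψ : ℝ | 0 ≤ cos (ψ + θ)} := measurableSet_le measurable_const (by fun_prop)
  exact Measurable.ite (m1.iff m2) measurable_const measurable_const

lemma HH_bound (θ A B ψ : ℝ) : ‖HH θ A B ψ‖ ≤ max ‖A‖ ‖B‖ := by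
  unfold HH; split_ifs <;> simp

lemma HH_ii (θ A B a b : ℝ) : IntervalIntegrable (HH θ A B) volume a b := by
  refine (intervalIntegrable_const (c := max ‖A‖ ‖B‖)).mono_fun
    (HH_measurable θ A B).aestronglyMeasurable (Eventually.of_forall fun x => ?_)
  refine (HH_bound θ A B x).trans (le_abs_self _)

lemma HH_periodic (θ A B : ℝ) : Function.Periodic (HH θ A B) (2 * π) := by
  intro x
  unfold HH
  rw [Real.cos_add_two_pi, show x + 2 * π + θ = x + θ + 2 * π by ring, Real.cos_add_two_pi]

lemma HH_const (θ A B C a b : ℝ) (hab : a ≤ b) (h : ∀ ψ, a < ψ → ψ < b → HH θ A B ψ = C) :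
    ∫ ψ in a..b, HH θ A B ψ = (b - a) * C := by
  have : ∫ ψ in a..b, HH θ A B ψ = ∫ ψ in a..b, C := by
    rw [intervalIntegral.integral_of_le hab, intervalIntegral.integral_of_le hab,
      integral_Ioc_eq_integral_Ioo, integral_Ioc_eq_integral_Ioo]
    exact setIntegral_congr_fun measurableSet_Ioo fun ψ hψ => h ψ hψ.1 hψ.2
  rw [this]; simp

lemma cos_neg_aux {x : ℝ} (h1 : π / 2 < x) (h2 : x < π + π / 2) : ¬ 0 ≤ cos x :=
  not_le.2 (Real.cos_neg_of_pi_div_two_lt_of_lt h1 h2)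

lemma cos_pos_aux {x : ℝ} (h1 : -(π / 2) < x) (h2 : x < π / 2) : 0 ≤ cos x :=
  (Real.cos_pos_of_mem_Ioo ⟨h1, h2⟩).le

lemma cos_pos_aux2 {x : ℝ} (h1 : π + π / 2 < x) (h2 : x < 2 * π + π / 2) : 0 ≤ cos x := by
  rw [← Real.cos_sub_two_pi]; exact cos_pos_aux (by linarith) (by linarith)

lemma HH_integral (θ A B : ℝ) (h0 : 0 ≤ θ) (h1 : θ ≤ π) (a : ℝ) :
    ∫ ψ in a..a + 2 * π, HH θ A B ψ = (2 * π - 2 * θ) * A + 2 * θ * B := by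
  have hp := Real.pi_pos
  rw [(HH_periodic θ A B).intervalIntegral_add_eq a (-(π / 2))]
  rw [← intervalIntegral.integral_add_adjacent_intervals (b := π / 2 - θ) (HH_ii ..) (HH_ii ..),
    ← intervalIntegral.integral_add_adjacent_intervals (a := π / 2 - θ) (b := π / 2) (HH_ii ..) (HH_ii ..),
    ← intervalIntegral.integral_add_adjacent_intervals (a := π / 2) (b := π + π / 2 - θ) (HH_ii ..) (HH_ii ..)]
  rw [HH_const θ A B A, HH_const θ A B B, HH_const θ A B A, HH_const θ A B B]
  · ring
  · linarith
  · intro ψ h2 h3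
    have c1 := cos_neg_aux (x := ψ) (by linarith) (by linarith)
    have c2 := cos_pos_aux2 (x := ψ + θ) (by linarith) (by linarith)
    simp [HH, c1, c2]
  · linarith
  · intro ψ h2 h3
    have c1 := cos_neg_aux (x := ψ) (by linarith) (by linarith)
    have c2 := cos_neg_aux (x := ψ + θ) (by linarith) (by linarith)
    simp [HH, c1, c2]
  · linarith
  · intro ψ h2 h3
    have c1 := cos_pos_aux (x := ψ) (by linarith) (by linarith)
    have c2 := cos_neg_aux (x := ψ + θ) (by linarith) (by linarith)
    simp [HH, c1, c2]
  · linarith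
  · intro ψ h2 h3
    have c1 := cos_pos_aux (x := ψ) (by linarith) (by linarith)
    have c2 := cos_pos_aux (x := ψ + θ) (by linarith) (by linarith)
    simp [HH, c1, c2]

lemma circle_lintegral (θ A B : ℝ) (h0 : 0 ≤ θ) (h1 : θ ≤ π) (hA : 0 ≤ A) (hB : 0 ≤ B) (α : ℝ) :
    ∫⁻ φ in Set.Ioc (-π) π, ENNReal.ofReal (HH θ A B (φ - α)) =
      ENNReal.ofReal ((2 * π - 2 * θ) * A + 2 * θ * B) := by
  have hp := Real.pi_pos
  have h := HH_integral θ A B h0 h1 (-π - α)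
  rw [show -π - α + 2 * π = π - α by ring, ← intervalIntegral.integral_comp_sub_right,
    intervalIntegral.integral_of_le (by linarith)] at h
  rw [← h, ofReal_integral_eq_lintegral_ofReal]
  · have := (HH_ii θ A B (-π - α) (π - α)).comp_sub_right α
    simp only [sub_add_cancel] at this
    rwa [intervalIntegrable_iff_integrableOn_Ioc_of_le (by linarith)] at this
  · refine Eventually.of_forall fun x => ?_
    simp only [HH]; split_ifs <;> simpa

lemma polar (s t : ℝ) (h : s ≠ 0) : ∃ l α : ℝ, 0 < l ∧ s = l * cos α ∧ t = l * sin α := by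
  have hz : (⟨s, t⟩ : ℂ) ≠ 0 := by
    intro hh; exact h (congrArg Complex.re hh)
  refine ⟨‖(⟨s, t⟩ : ℂ)‖, Complex.arg ⟨s, t⟩, by positivity, ?_, ?_⟩
  · rw [Complex.norm_mul_cos_arg]
  · rw [Complex.norm_mul_sin_arg]

set_option maxHeartbeats 1600000 in
lemma core {d : ℕ} (hd : 2 ≤ d) (μ : Measure (SOd d)) [IsProbabilityMeasure μ]
    (hμright : ∀ R₀ : SOd d, μ.map (fun R => R * R₀) = μ)
    (n m : EuclideanSpace ℝ (Fin d)) (hn : ‖n‖ = 1) (hm : ‖m‖ = 1) :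
    ∫⁻ R, ENNReal.ofReal ‖FR R n - FR R m‖ ∂μ ≤
      ENNReal.ofReal (1 + 2 / π) * ENNReal.ofReal ((1 / Real.sqrt 2) * frobNorm (outer n n - outer m m)) := by
  have hd0 : 0 < d := by omega
  have hp := Real.pi_pos
  have hnn : inner ℝ n n = (1:ℝ) := by rw [real_inner_self_eq_norm_sq, hn]; norm_num
  have hmm : inner ℝ m m = (1:ℝ) := by rw [real_inner_self_eq_norm_sq, hm]; norm_num
  obtain ⟨v, θ, hv, hnv, h0, h1, hmeq⟩ := exists_frame hd n m hn hm
  have hnm : inner ℝ n m = cos θ := by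
    rw [hmeq, inner_add_right, inner_smul_right, inner_smul_right, hnn, hnv]; ring
  have hsin0 : 0 ≤ sin θ := Real.sin_nonneg_of_nonneg_of_le_pi h0 h1
  have hs0 : 0 ≤ sin (θ / 2) := Real.sin_nonneg_of_nonneg_of_le_pi (by linarith) (by linarith)
  have hc0 : 0 ≤ cos (θ / 2) := Real.cos_nonneg_of_neg_pi_div_two_le_of_le (by linarith) (by linarith)
  have hcos2 : cos θ = 2 * cos (θ / 2) ^ 2 - 1 := by
    rw [← Real.cos_two_mul]; ring_nf
  have hsc := Real.sin_sq_add_cos_sq (θ / 2)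
  have hsub : ‖n - m‖ = 2 * sin (θ / 2) := by
    rw [← sq_eq_sq₀ (norm_nonneg _) (by positivity), norm_sub_sq_real, hnm, hn, hm, hcos2]
    linear_combination (-4) * hsc
  have hadd : ‖n + m‖ = 2 * cos (θ / 2) := by
    rw [← sq_eq_sq₀ (norm_nonneg _) (by positivity), norm_add_sq_real, hnm, hn, hm, hcos2]
    ring
  have hfrob : (1 / Real.sqrt 2) * frobNorm (outer n n - outer m m) = sin θ := by
    have e : ∑ i, ∑ j, ((outer n n - outer m m) i j) ^ 2 = 2 * sin θ ^ 2 := by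
      have e1 : ∑ i, ∑ j, ((outer n n - outer m m) i j) ^ 2 =
          (∑ i, n i * n i) * (∑ j, n j * n j) - 2 * ((∑ i, n i * m i) * (∑ j, n j * m j))
            + (∑ i, m i * m i) * (∑ j, m j * m j) := by
        rw [Finset.sum_mul_sum, Finset.sum_mul_sum, Finset.sum_mul_sum]
        simp only [Finset.mul_sum, ← Finset.sum_add_distrib, ← Finset.sum_sub_distrib]
        refine Finset.sum_congr rfl fun i _ => Finset.sum_congr rfl fun j _ => ?_
        simp only [outer, Pi.sub_apply]; ring
      have e2 : ∀ x y : EuclideanSpace ℝ (Fin d), ∑ i, x i * y i = inner ℝ x y :=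
        fun x y => dot_of_inner x y
      rw [e1, e2, e2, e2, hnn, hnm, hmm]
      linear_combination (-2) * Real.sin_sq_add_cos_sq θ
    rw [frobNorm, e, Real.sqrt_mul (by norm_num), Real.sqrt_sq hsin0]
    field_simp
  rw [hfrob, ← ENNReal.ofReal_mul (by positivity)]
  -- the integrand
  have hG : ∀ R : SOd d, ‖FR R n - FR R m‖ =
      if (0 ≤ LL R n ↔ 0 ≤ LL R m) then 2 * sin (θ / 2) else 2 * cos (θ / 2) := by
    intro R
    rw [FR_eq, FR_eq, ← hsub, ← hadd]
    by_cases ha : 0 ≤ LL R n <;> by_cases hb : 0 ≤ LL R m <;> simp only [ha, hb, if_true, if_false, iff_true, iff_false, iff_self, not_true_eq_false]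
    · rw [sub_neg_eq_add]
    · rw [← norm_neg]; congr 1; abel
    · rw [← norm_neg]; congr 1; abel
  have hmF : ∀ x : EuclideanSpace ℝ (Fin d), Measurable fun R : SOd d => FR R x := fun x =>
    (FR_measurable hd0).comp (measurable_id.prodMk measurable_const)
  have hmG : Measurable fun R : SOd d => ENNReal.ofReal ‖FR R n - FR R m‖ :=
    ((hmF n).sub (hmF m)).norm.ennreal_ofReal
  set G : SOd d → ℝ≥0∞ := fun R => ENNReal.ofReal ‖FR R n - FR R m‖ with hGdef
  let S : ℝ → SOd d := fun φ => ⟨rotM n v φ, rotM_mem hnn hv hnv φ⟩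
  have hLn : ∀ R φ, LL (R * S φ) n = cos φ * LL R n + sin φ * LL R v := by
    intro R φ
    rw [LL_mul, show rot (S φ) n = _ from rotM_act_u hnn hnv φ, LL_add hd0, LL_smul hd0, LL_smul hd0]
  have hLv : ∀ R φ, LL (R * S φ) v = cos φ * LL R v - sin φ * LL R n := by
    intro R φ
    rw [LL_mul, show rot (S φ) v = _ from rotM_act_v hv hnv φ, sub_eq_add_neg, ← neg_smul,
      LL_add hd0, LL_smul hd0, LL_smul hd0]
    ring
  have hLm : ∀ R, LL R m = cos θ * LL R n + sin θ * LL R v := by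
    intro R
    rw [hmeq, LL_add hd0, LL_smul hd0, LL_smul hd0]
  have hinv : ∀ φ, ∫⁻ R, G (R * S φ) ∂μ = ∫⁻ R, G R ∂μ := by
    intro φ
    conv_rhs => rw [← hμright (S φ), lintegral_map hmG (mulRight_measurable _)]
  have hLmeas : ∀ x : EuclideanSpace ℝ (Fin d), Measurable fun R : SOd d => LL R x := fun x =>
    (LL_measurable hd0).comp (measurable_id.prodMk measurable_const)
  have hjoint : Measurable fun p : ℝ × SOd d => G (p.2 * S p.1) := by
    have a1 : Measurable fun p : ℝ × SOd d => LL (p.2 * S p.1) n := by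
      simp only [hLn]
      have bn : Measurable fun p : ℝ × SOd d => LL p.2 n := (hLmeas n).comp measurable_snd
      have bv : Measurable fun p : ℝ × SOd d => LL p.2 v := (hLmeas v).comp measurable_snd
      fun_prop
    have a2 : Measurable fun p : ℝ × SOd d => LL (p.2 * S p.1) v := by
      simp only [hLv]
      have bn : Measurable fun p : ℝ × SOd d => LL p.2 n := (hLmeas n).comp measurable_snd
      have bv : Measurable fun p : ℝ × SOd d => LL p.2 v := (hLmeas v).comp measurable_snd
      fun_prop
    have a3 : Measurable fun p : ℝ × SOd d => LL (p.2 * S p.1) m := by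
      simp only [hLm]; fun_prop
    simp only [hGdef, hG]
    refine Measurable.ennreal_ofReal (Measurable.ite ?_ measurable_const measurable_const)
    exact MeasurableSet.iff (measurableSet_le measurable_const a1) (measurableSet_le measurable_const a3)
  have hvol : volume (Set.Ioc (-π) π) = ENNReal.ofReal (2 * π) := by
    rw [Real.volume_Ioc]; congr 1; ring
  have hmain : ENNReal.ofReal (2 * π) * ∫⁻ R, G R ∂μ =
      ENNReal.ofReal ((2 * π - 2 * θ) * (2 * sin (θ / 2)) + 2 * θ * (2 * cos (θ / 2))) := by
    calc ENNReal.ofReal (2 * π) * ∫⁻ R, G R ∂μ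
        = ∫⁻ φ in Set.Ioc (-π) π, ∫⁻ R, G (R * S φ) ∂μ := by
          simp only [hinv]
          rw [setLIntegral_const, hvol, mul_comm]
      _ = ∫⁻ R, (∫⁻ φ in Set.Ioc (-π) π, G (R * S φ)) ∂μ :=
          lintegral_lintegral_swap hjoint.aemeasurable
      _ = ∫⁻ R, ENNReal.ofReal ((2 * π - 2 * θ) * (2 * sin (θ / 2)) + 2 * θ * (2 * cos (θ / 2))) ∂μ := by
          refine lintegral_congr_ae ?_
          filter_upwards [LL_ae_ne hd μ hμright n hn] with R hR
          obtain ⟨l, α, hl, e1, e2⟩ := polar (LL R n) (LL R v) hR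
          rw [← circle_lintegral θ _ _ h0 h1 (by positivity) (by positivity) α]
          refine lintegral_congr fun φ => ?_
          have f1 : LL (R * S φ) n = l * cos (φ - α) := by
            rw [hLn, e1, e2, Real.cos_sub]; ring
          have f2 : LL (R * S φ) m = l * cos (φ - α + θ) := by
            rw [hLm, hLn, hLv, e1, e2, Real.cos_add, Real.cos_sub, Real.sin_sub]; ring
          simp only [hGdef, hG, HH, f1, f2, mul_nonneg_iff_of_pos_left hl]
      _ = _ := by simp
  have hle : ENNReal.ofReal (2 * π) * ∫⁻ R, G R ∂μ ≤
      ENNReal.ofReal (2 * π) * ENNReal.ofReal ((1 + 2 / π) * sin θ) := by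
    rw [hmain, ← ENNReal.ofReal_mul (by positivity)]
    exact ENNReal.ofReal_le_ofReal (trig_bound θ h0 h1)
  rwa [ENNReal.mul_le_mul_iff_right (by simpa using hp) ENNReal.ofReal_ne_top] at hle

lemma joint_meas {α E EB : Type*} [MeasurableSpace α] [NormedAddCommGroup E] [MeasurableSpace E]
    [BorelSpace E] [SecondCountableTopology E] [NormedAddCommGroup EB] [MeasurableSpace EB]
    [BorelSpace EB] [SecondCountableTopology EB] (f : α → E → EB)
    (hf : Measurable fun p : α × E => f p.1 p.2) (ρ : ℝ → ℝ) (hρ : Measurable ρ) :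
    Measurable fun q : (α × E) × E =>
      ENNReal.ofReal (‖f q.1.1 q.1.2 - f q.1.1 q.2‖ / ‖q.1.2 - q.2‖ * ρ ‖q.1.2 - q.2‖) := by
  have a1 : Measurable fun q : (α × E) × E => f q.1.1 q.1.2 := hf.comp measurable_fst
  have a2 : Measurable fun q : (α × E) × E => f q.1.1 q.2 :=
    hf.comp ((measurable_fst.comp measurable_fst).prodMk measurable_snd)
  have a3 : Measurable fun q : (α × E) × E => ‖q.1.2 - q.2‖ := by fun_prop
  exact (((a1.sub a2).norm.div a3).mul (hρ.comp a3)).ennreal_ofReal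

lemma comp_meas {α E EB EC : Type*} [MeasurableSpace α] [MeasurableSpace E] [MeasurableSpace EB]
    [MeasurableSpace EC] (f : α → EB → EC) (hf : Measurable fun p : α × EB => f p.1 p.2)
    (n : E → EB) (hn : Measurable n) : Measurable fun p : α × E => f p.1 (n p.2) :=
  hf.comp (measurable_fst.prodMk (hn.comp measurable_snd))

lemma slice_meas {α E β : Type*} [MeasurableSpace α] [MeasurableSpace E] [MeasurableSpace β]
    (f : (α × E) × E → β) (hf : Measurable f) (x : E) :
    Measurable fun p : α × E => f ((p.1, x), p.2) :=
  hf.comp ((measurable_fst.prodMk measurable_const).prodMk measurable_snd)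

theorem averaging_inequality_euclidean
    (N d : ℕ) (hN : 1 ≤ N) (hd : 2 ≤ d)
    (μ : Measure (SOd d)) [IsProbabilityMeasure μ]
    (hμleft : ∀ R₀ : SOd d, μ.map (fun R => R₀ * R) = μ)
    (hμright : ∀ R₀ : SOd d, μ.map (fun R => R * R₀) = μ)
    (Ω : Set (EuclideanSpace ℝ (Fin N))) (hΩ : IsOpen Ω)
    (n : EuclideanSpace ℝ (Fin N) → EuclideanSpace ℝ (Fin d))
    (hnmeas : Measurable n) (hnsph : ∀ x, ‖n x‖ = 1)
    (ρ : ℝ → ℝ) (hρmeas : Measurable ρ) (hρnonneg : ∀ r > (0 : ℝ), 0 ≤ ρ r) :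
    ∫⁻ R, (∫⁻ x in Ω, ∫⁻ y in Ω, ENNReal.ofReal
        (‖FR R (n x) - FR R (n y)‖ / ‖x - y‖ * ρ ‖x - y‖)) ∂μ ≤
    ENNReal.ofReal (1 + 2 / π) * ∫⁻ x in Ω, ∫⁻ y in Ω, ENNReal.ofReal
        ((1 / Real.sqrt 2) * frobNorm (outer (n x) (n x) - outer (n y) (n y)) / ‖x - y‖ *
          ρ ‖x - y‖) := by
  have hd0 : 0 < d := by omega
  have hmF : Measurable fun p : SOd d × EuclideanSpace ℝ (Fin N) => FR p.1 (n p.2) :=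
    comp_meas (fun R x => FR R x) (FR_measurable hd0) n hnmeas
  have hJ : Measurable fun q : (SOd d × EuclideanSpace ℝ (Fin N)) × EuclideanSpace ℝ (Fin N) =>
      ENNReal.ofReal (‖FR q.1.1 (n q.1.2) - FR q.1.1 (n q.2)‖ / ‖q.1.2 - q.2‖ * ρ ‖q.1.2 - q.2‖) := by
    exact joint_meas (fun R x => FR R (n x)) hmF ρ hρmeas
  have hpt : ∀ x y : EuclideanSpace ℝ (Fin N),
      ∫⁻ R, ENNReal.ofReal (‖FR R (n x) - FR R (n y)‖ / ‖x - y‖ * ρ ‖x - y‖) ∂μ ≤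
      ENNReal.ofReal (1 + 2 / π) * ENNReal.ofReal
        ((1 / Real.sqrt 2) * frobNorm (outer (n x) (n x) - outer (n y) (n y)) / ‖x - y‖ *
          ρ ‖x - y‖) := by
    intro x y
    by_cases hxy : ‖x - y‖ = 0
    · simp [hxy]
    have hpos : 0 < ‖x - y‖ := lt_of_le_of_ne (norm_nonneg _) (Ne.symm hxy)
    have hK : 0 ≤ ρ ‖x - y‖ / ‖x - y‖ := div_nonneg (hρnonneg _ hpos) hpos.le
    have e : ∀ a : ℝ, 0 ≤ a → ENNReal.ofReal (a / ‖x - y‖ * ρ ‖x - y‖) =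
        ENNReal.ofReal a * ENNReal.ofReal (ρ ‖x - y‖ / ‖x - y‖) := by
      intro a ha
      rw [← ENNReal.ofReal_mul ha]; congr 1; ring
    have hf : 0 ≤ (1 / Real.sqrt 2) * frobNorm (outer (n x) (n x) - outer (n y) (n y)) :=
      mul_nonneg (by positivity) (Real.sqrt_nonneg _)
    rw [e _ hf, lintegral_congr fun R => e _ (norm_nonneg _),
      lintegral_mul_const' _ _ ENNReal.ofReal_ne_top, ← mul_assoc]
    gcongr
    exact core hd μ hμright (n x) (n y) (hnsph x) (hnsph y)
  clear hμleft hμright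
  have hJ2 : Measurable fun q : SOd d × EuclideanSpace ℝ (Fin N) => ∫⁻ y in Ω,
      ENNReal.ofReal (‖FR q.1 (n q.2) - FR q.1 (n y)‖ / ‖q.2 - y‖ * ρ ‖q.2 - y‖) :=
    Measurable.lintegral_prod_right' (ν := volume.restrict Ω) hJ
  rw [lintegral_lintegral_swap hJ2.aemeasurable,
    ← lintegral_const_mul' _ _ ENNReal.ofReal_ne_top]
  refine lintegral_mono fun x => ?_
  have hJ3 : Measurable fun q : SOd d × EuclideanSpace ℝ (Fin N) =>
      ENNReal.ofReal (‖FR q.1 (n x) - FR q.1 (n q.2)‖ / ‖x - q.2‖ * ρ ‖x - q.2‖) :=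
    slice_meas _ hJ x
  beta_reduce
  rw [lintegral_lintegral_swap hJ3.aemeasurable,
    ← lintegral_const_mul' _ _ ENNReal.ofReal_ne_top]
  exact lintegral_mono fun y => hpt x y
end
end

section
/- Let d ≥ 2. For all n, m ∈ S^{d-1}, the normalized Haar measure of the set of special rotations under which the signs of the last coordinates of Rn and Rm disagree equals arccos⟪n,m⟫/π; that is, μ({ R ∈ SO(d) : ⟪Rn, e_d⟫·⟪Rm, e_d⟫ < 0 }) = arccos⟪n, m⟫ / π. -/
noncomputable section
open MeasureTheory Real Filter
open scoped ENNReal RealInnerProductSpace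

theorem planeRot {d : ℕ} (u v : Fin d → ℝ) (hu : u ⬝ᵥ u = 1) (hv : v ⬝ᵥ v = 1)
    (huv : u ⬝ᵥ v = 0) (t : ℝ) : ∃ R : Matrix.specialOrthogonalGroup (Fin d) ℝ,
    (R : Matrix (Fin d) (Fin d) ℝ).mulVec u = cos t • u + sin t • v ∧
    (R : Matrix (Fin d) (Fin d) ℝ).mulVec v = -sin t • u + cos t • v := by
  have hvu : v ⬝ᵥ u = 0 := by rw [dotProduct_comm]; exact huv
  set P := Matrix.vecMulVec u u + Matrix.vecMulVec v v with hP
  set K := Matrix.vecMulVec v u - Matrix.vecMulVec u v with hK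
  have hPP : P * P = P := by
    simp [hP, mul_add, add_mul, Matrix.vecMulVec_mul_vecMulVec, hu, hv, huv, hvu]
  have hPK : P * K = K := by
    simp [hP, hK, mul_sub, add_mul, Matrix.vecMulVec_mul_vecMulVec, hu, hv, huv, hvu]
  have hKP : K * P = K := by
    simp [hP, hK, mul_add, sub_mul, Matrix.vecMulVec_mul_vecMulVec, hu, hv, huv, hvu]
    abel
  have hKK : K * K = -P := by
    simp [hP, hK, mul_sub, sub_mul, Matrix.vecMulVec_mul_vecMulVec, hu, hv, huv, hvu]
    abel
  have hPt : P.transpose = P := by simp [hP, Matrix.transpose_vecMulVec]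
  have hKt : K.transpose = -K := by simp [hK, Matrix.transpose_vecMulVec]
  let R : ℝ → Matrix (Fin d) (Fin d) ℝ := fun s => 1 + (cos s - 1) • P + sin s • K
  have hadd : ∀ s r, R s * R r = R (s + r) := by
    intro s r
    simp only [R, mul_add, add_mul, smul_mul_assoc, mul_smul_comm, hPP, hPK, hKP, hKK, mul_one,
      one_mul, cos_add, sin_add]
    module
  have hRt : ∀ s, (R s).transpose = R (-s) := by
    intro s
    simp [R, hPt, hKt]
  have hR0 : R 0 = 1 := by simp [R]
  have horth : ∀ s, R s ∈ Matrix.orthogonalGroup (Fin d) ℝ := by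
    intro s
    rw [Matrix.mem_orthogonalGroup_iff, hRt, hadd]
    simp [hR0]
  have hdet : ∀ s, (R s).det = 1 := by
    intro s
    have h1 : R (s/2) * R (s/2) = R s := by rw [hadd]; congr 1; ring
    have h2 : R (s/2) * (R (s/2)).transpose = 1 := by rw [hRt, hadd]; simp [hR0]
    have h3 := congrArg Matrix.det h2
    rw [Matrix.det_mul, Matrix.det_transpose, Matrix.det_one] at h3
    rw [← h1, Matrix.det_mul, h3]
  refine ⟨⟨R t, Matrix.mem_specialOrthogonalGroup_iff.2 ⟨horth t, hdet t⟩⟩, ?_, ?_⟩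
  · simp [R, hP, hK, Matrix.add_mulVec, Matrix.sub_mulVec, Matrix.smul_mulVec, Matrix.vecMulVec_mulVec, hu, hv, huv, hvu]
    module
  · simp [R, hP, hK, Matrix.add_mulVec, Matrix.sub_mulVec, Matrix.smul_mulVec, Matrix.vecMulVec_mulVec, hu, hv, huv, hvu]
    module

theorem sq_pos_dot {d : ℕ} (x : Fin d → ℝ) (hx : x ≠ 0) : 0 < x ⬝ᵥ x := by
  have h1 : 0 ≤ x ⬝ᵥ x := Finset.sum_nonneg fun i _ => mul_self_nonneg _
  have h2 : x ⬝ᵥ x ≠ 0 := by simpa using hx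
  exact lt_of_le_of_ne h1 h2.symm

theorem exists_unit_perp {d : ℕ} (hd : 2 ≤ d) (u : Fin d → ℝ) :
    ∃ v : Fin d → ℝ, v ⬝ᵥ v = 1 ∧ u ⬝ᵥ v = 0 := by
  obtain ⟨w, hw, hw0⟩ : ∃ w : Fin d → ℝ, w ≠ 0 ∧ u ⬝ᵥ w = 0 := by
    let i : Fin d := ⟨0, by omega⟩
    let j : Fin d := ⟨1, by omega⟩
    have hij : i ≠ j := by simp [i, j]
    by_cases h : u i = 0
    · exact ⟨Pi.single i 1, by simp, by simp [h]⟩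
    · refine ⟨Pi.single j (u i) - Pi.single i (u j), ?_, ?_⟩
      · intro h0
        have := congrFun h0 j
        simp [hij.symm, h] at this
      · simp [dotProduct_sub]; ring
  have hp := sq_pos_dot w hw
  refine ⟨(√(w ⬝ᵥ w))⁻¹ • w, ?_, by simp [hw0]⟩
  simp only [smul_dotProduct, dotProduct_smul, smul_eq_mul]
  rw [← mul_assoc, ← mul_inv, Real.mul_self_sqrt hp.le, inv_mul_cancel₀ hp.ne']

theorem exists_decomp {d : ℕ} (hd : 2 ≤ d) (u m : Fin d → ℝ) (hu : u ⬝ᵥ u = 1)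
    (hm : m ⬝ᵥ m = 1) : ∃ v : Fin d → ℝ, v ⬝ᵥ v = 1 ∧ u ⬝ᵥ v = 0 ∧
      m = cos (arccos (u ⬝ᵥ m)) • u + sin (arccos (u ⬝ᵥ m)) • v := by
  set c := u ⬝ᵥ m with hc
  have hmu : m ⬝ᵥ u = c := by rw [dotProduct_comm]
  have key : (m - c • u) ⬝ᵥ (m - c • u) = 1 - c ^ 2 := by
    simp [dotProduct_sub, sub_dotProduct, hu, hm, hmu, ← hc]; ring
  have hperp : u ⬝ᵥ (m - c • u) = 0 := by simp [dotProduct_sub, hu, ← hc]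
  have hnn : 0 ≤ 1 - c ^ 2 := by
    rw [← key]; exact Finset.sum_nonneg fun i _ => mul_self_nonneg _
  rw [cos_arccos (by nlinarith) (by nlinarith), sin_arccos]
  by_cases h : 1 - c ^ 2 = 0
  · obtain ⟨v, hv, huv⟩ := exists_unit_perp hd u
    refine ⟨v, hv, huv, ?_⟩
    rw [h] at key
    have := dotProduct_self_eq_zero.1 key
    simp only [h, sqrt_zero, zero_smul, add_zero]
    exact sub_eq_zero.1 this
  · have hp : 0 < 1 - c ^ 2 := lt_of_le_of_ne hnn (Ne.symm h)
    have hs : 0 < √(1 - c ^ 2) := Real.sqrt_pos.2 hp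
    refine ⟨(√(1 - c ^ 2))⁻¹ • (m - c • u), ?_, ?_, ?_⟩
    · rw [smul_dotProduct, dotProduct_smul, key, smul_eq_mul, smul_eq_mul, ← mul_assoc, ← mul_inv,
        Real.mul_self_sqrt hnn, inv_mul_cancel₀ h]
    · rw [dotProduct_smul, hperp, smul_zero]
    · rw [smul_smul, mul_inv_cancel₀ hs.ne', one_smul]; abel

theorem null_perp {d : ℕ} (hd : 2 ≤ d) (ν : Measure (Fin d → ℝ)) [IsProbabilityMeasure ν]
    (hinv : ∀ (R : SOd d) (S : Set (Fin d → ℝ)), MeasurableSet S →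
      ν {w | Matrix.vecMul w (R : Matrix (Fin d) (Fin d) ℝ) ∈ S} = ν S)
    (hne : ∀ᵐ w ∂ν, w ≠ 0) (u : Fin d → ℝ) (hu : u ⬝ᵥ u = 1) :
    ∀ᵐ w ∂ν, w ⬝ᵥ u ≠ 0 := by
  have hmeas : MeasurableSet {p : (Fin d → ℝ) × (Fin d → ℝ) | p.1 ⬝ᵥ p.2 ≠ 0} := by
    apply IsOpen.measurableSet
    apply isOpen_ne_fun
    · unfold dotProduct; fun_prop
    · fun_prop
  have h1 : ∀ᵐ w ∂ν, ∀ᵐ x : Fin d → ℝ, w ⬝ᵥ x ≠ 0 := by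
    filter_upwards [hne] with w hw
    let f : (Fin d → ℝ) →ₗ[ℝ] ℝ := 
      { toFun := fun x => w ⬝ᵥ x
        map_add' := fun x y => dotProduct_add _ _ _
        map_smul' := fun c x => dotProduct_smul _ _ _ }
    have h := Measure.addHaar_submodule (volume : Measure (Fin d → ℝ)) (LinearMap.ker f) (by
      intro h
      have : w ∈ LinearMap.ker f := by rw [h]; trivial
      exact (sq_pos_dot w hw).ne' this)
    rw [ae_iff]
    convert h using 2
    ext x
    simp [f]
  rw [Measure.ae_ae_comm hmeas] at h1
  obtain ⟨x, hx⟩ := h1.exists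
  have hx0 : x ≠ 0 := by
    rintro rfl
    obtain ⟨w, hw⟩ := hx.exists
    simp at hw
  have hp := sq_pos_dot x hx0
  set y := (√(x ⬝ᵥ x))⁻¹ • x with hy
  have hyy : y ⬝ᵥ y = 1 := by
    simp only [hy, smul_dotProduct, dotProduct_smul, smul_eq_mul]
    rw [← mul_assoc, ← mul_inv, Real.mul_self_sqrt hp.le, inv_mul_cancel₀ hp.ne']
  obtain ⟨v, hv, huv, hyuv⟩ := exists_decomp hd u y hu hyy
  obtain ⟨R, hR, -⟩ := planeRot u v hu hv huv (arccos (u ⬝ᵥ y))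
  rw [← hyuv] at hR
  have hS : MeasurableSet {w : Fin d → ℝ | w ⬝ᵥ u = 0} := by
    apply IsClosed.measurableSet
    apply isClosed_eq
    · unfold dotProduct; fun_prop
    · fun_prop
  have h2 := hinv R _ hS
  simp only [Set.mem_ofPred_eq, ← Matrix.dotProduct_mulVec, hR] at h2
  rw [ae_iff]
  simp only [not_not]
  rw [← h2]
  have h3 : ∀ᵐ w ∂ν, w ⬝ᵥ y ≠ 0 := by
    filter_upwards [hx] with w hw
    rw [hy, dotProduct_smul, smul_eq_mul]
    exact mul_ne_zero (inv_ne_zero (Real.sqrt_pos.2 hp).ne') hw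
  simpa [ae_iff] using h3

theorem sign_integral (θ : ℝ) (h0 : 0 ≤ θ) (hπ : θ ≤ π) (φ : ℝ) :
    ∫ t in (0:ℝ)..π, Set.indicator {t | cos t * cos (t + θ) < 0} (fun _ => (1:ℝ)) (t - φ) = θ := by
  set F : ℝ → ℝ := Set.indicator {t | cos t * cos (t + θ) < 0} (fun _ => (1:ℝ)) with hF
  have hper : Function.Periodic F π := by
    intro t
    have : cos (t + π + θ) = - cos (t + θ) := by rw [← cos_add_pi]; congr 1; ring
    simp only [hF, Set.indicator, Set.mem_ofPred_eq, this, cos_add_pi, neg_mul_neg]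
  rw [intervalIntegral.integral_comp_sub_right F φ]
  have e1 : π - φ = (0 - φ) + π := by ring
  rw [e1, hper.intervalIntegral_add_eq (0 - φ) (-(π/2)),
    intervalIntegral.integral_of_le (by linarith [pi_pos])]
  have e2 : -(π / 2) + π = π / 2 := by ring
  rw [e2]
  have hcongr : ∀ t ∈ Set.Ioc (-(π / 2)) (π / 2),
      F t = Set.indicator (Set.Ioo (π / 2 - θ) (π / 2)) (fun _ => (1:ℝ)) t := by
    intro t ht
    have ht1 : -(π / 2) < t := ht.1
    have ht2 : t ≤ π / 2 := ht.2
    have hiff : cos t * cos (t + θ) < 0 ↔ π / 2 - θ < t ∧ t < π / 2 := by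
      rcases ht2.eq_or_lt with h | h
      · subst h; simp
      · have hc : 0 < cos t := cos_pos_of_mem_Ioo ⟨ht1, h⟩
        constructor
        · intro hneg
          refine ⟨?_, h⟩
          by_contra hle
          have : 0 ≤ cos (t + θ) := cos_nonneg_of_mem_Icc ⟨by linarith, by linarith⟩
          exact absurd hneg (not_lt.2 (mul_nonneg hc.le this))
        · rintro ⟨h1, -⟩
          exact mul_neg_of_pos_of_neg hc
            (cos_neg_of_pi_div_two_lt_of_lt (by linarith) (by linarith))
    simp only [hF, Set.indicator, Set.mem_ofPred_eq, Set.mem_Ioo, hiff]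
  have hsub : Set.Ioo (π / 2 - θ) (π / 2) ⊆ Set.Ioc (-(π / 2)) (π / 2) :=
    fun t ht => ⟨by linarith [ht.1], ht.2.le⟩
  rw [setIntegral_congr_fun measurableSet_Ioc hcongr, setIntegral_indicator measurableSet_Ioo,
    Set.inter_eq_self_of_subset_right hsub]
  simp [h0]

theorem main_nu {d : ℕ} (hd : 2 ≤ d) (ν : Measure (Fin d → ℝ)) [IsProbabilityMeasure ν]
    (hinv : ∀ (R : SOd d) (S : Set (Fin d → ℝ)), MeasurableSet S →
      ν {w | Matrix.vecMul w (R : Matrix (Fin d) (Fin d) ℝ) ∈ S} = ν S)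
    (hne : ∀ᵐ w ∂ν, w ≠ 0) (u m : Fin d → ℝ) (hu : u ⬝ᵥ u = 1) (hm : m ⬝ᵥ m = 1) :
    ν {w | (w ⬝ᵥ u) * (w ⬝ᵥ m) < 0} = ENNReal.ofReal (arccos (u ⬝ᵥ m) / π) := by
  obtain ⟨v, hv, huv, hmuv⟩ := exists_decomp hd u m hu hm
  set θ := arccos (u ⬝ᵥ m) with hθ
  set S := {w : Fin d → ℝ | (w ⬝ᵥ u) * (w ⬝ᵥ m) < 0} with hS
  have hSm : MeasurableSet S := by
    apply IsOpen.measurableSet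
    apply isOpen_lt
    · unfold dotProduct; fun_prop
    · fun_prop
  let g : ℝ → (Fin d → ℝ) → ℝ := fun t w => cos t * (w ⬝ᵥ u) + sin t * (w ⬝ᵥ v)
  let A : Set (ℝ × (Fin d → ℝ)) := {p | g p.1 p.2 * g (p.1 + θ) p.2 < 0}
  have hA : MeasurableSet A := by
    apply IsOpen.measurableSet
    apply isOpen_lt
    · simp only [g, dotProduct]; fun_prop
    · fun_prop
  have hrot : ∀ t, ν {w | (t, w) ∈ A} = ν S := by
    intro t
    obtain ⟨R, hR1, hR2⟩ := planeRot u v hu hv huv t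
    rw [← hinv R S hSm]
    congr 1
    ext w
    simp only [hS, Set.mem_ofPred_eq, ← Matrix.dotProduct_mulVec, A, g]
    rw [hmuv, Matrix.mulVec_add, Matrix.mulVec_smul, Matrix.mulVec_smul, hR1, hR2]
    simp only [dotProduct_add, dotProduct_smul, smul_eq_mul, cos_add, sin_add]
    ring_nf
  let G : ℝ → (Fin d → ℝ) → ℝ := fun t w => A.indicator (fun _ => (1:ℝ)) (t, w)
  have hGint : Integrable (Function.uncurry G) ((volume.restrict (Set.Ioc 0 π)).prod ν) := by
    have : Function.uncurry G = A.indicator (fun _ => (1:ℝ)) := by ext ⟨t, w⟩; rfl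
    rw [this]
    exact (integrable_const _).indicator hA
  have hswap := integral_integral_swap hGint
  have hL : ∀ t, ∫ w, G t w ∂ν = ν.real S := by
    intro t
    have hm' : MeasurableSet {w | (t, w) ∈ A} := measurable_prodMk_left hA
    have : G t = Set.indicator {w | (t, w) ∈ A} (fun _ => (1:ℝ)) := by
      ext w; simp [G, Set.indicator]
    rw [this, integral_indicator hm']
    simp [Measure.real, hrot t]
  have hRR : ∀ᵐ w ∂ν, ∫ t in Set.Ioc 0 π, G t w = θ := by
    filter_upwards [null_perp hd ν hinv hne u hu] with w hw
    let z : ℂ := ⟨w ⬝ᵥ u, w ⬝ᵥ v⟩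
    have hz : z ≠ 0 := fun h => hw (congrArg Complex.re h)
    have hr : 0 < ‖z‖ := norm_pos_iff.2 hz
    have ha : w ⬝ᵥ u = ‖z‖ * cos z.arg := (Complex.norm_mul_cos_arg z).symm
    have hb : w ⬝ᵥ v = ‖z‖ * sin z.arg := (Complex.norm_mul_sin_arg z).symm
    have hg : ∀ t, g t w = ‖z‖ * cos (t - z.arg) := by
      intro t
      simp only [g]
      rw [cos_sub, ha, hb]; ring
    rw [← sign_integral θ (arccos_nonneg _) (arccos_le_pi _) z.arg,
      intervalIntegral.integral_of_le pi_pos.le]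
    congr 1
    ext t
    simp only [G, A, Set.indicator, Set.mem_ofPred_eq, hg]
    have : ‖z‖ * cos (t - z.arg) * (‖z‖ * cos (t + θ - z.arg)) < 0 ↔
        cos (t - z.arg) * cos (t - z.arg + θ) < 0 := by
      have e : t + θ - z.arg = t - z.arg + θ := by ring
      rw [e, show ‖z‖ * cos (t - z.arg) * (‖z‖ * cos (t - z.arg + θ)) =
        (‖z‖ * ‖z‖) * (cos (t - z.arg) * cos (t - z.arg + θ)) by ring]
      have hrr := mul_pos hr hr
      exact ⟨fun h => neg_of_mul_neg_right h hrr.le, fun h => mul_neg_of_pos_of_neg hrr h⟩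
    simp only [this]
  rw [integral_congr_ae hRR] at hswap
  simp only [hL] at hswap
  simp [pi_pos.le] at hswap
  have : ν.real S = θ / π := by
    field_simp
    linarith
  rw [← this, ofReal_measureReal]

/-!
STATEMENT 9 (claim (claim:meas) in the proof of Lemma 3.2): the Haar measure of the set
of rotations under which the signs of the last coordinates of Rn and Rm disagree equals
arccos⟪n,m⟫/π.
-/

theorem haar_measure_sign_disagreement
    (d : ℕ) (hd : 2 ≤ d)
    (μ : Measure (SOd d)) [IsProbabilityMeasure μ]
    (hμleft : ∀ R₀ : SOd d, μ.map (fun R => R₀ * R) = μ)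
    (hμright : ∀ R₀ : SOd d, μ.map (fun R => R * R₀) = μ)
    (n m : EuclideanSpace ℝ (Fin d)) (hn : ‖n‖ = 1) (hm : ‖m‖ = 1) :
    μ {R : SOd d | lastCoord (rot R n) * lastCoord (rot R m) < 0} =
      ENNReal.ofReal (Real.arccos ⟪n, m⟫ / π) := by
  have hrowm : Measurable (fun R : SOd d => (R : Matrix (Fin d) (Fin d) ℝ) ⟨d - 1, by omega⟩) :=
    (measurable_pi_apply _).comp measurable_subtype_coe
  set row : SOd d → (Fin d → ℝ) := fun R => (R : Matrix (Fin d) (Fin d) ℝ) ⟨d - 1, by omega⟩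
    with hrow
  have hprob : IsProbabilityMeasure (μ.map row) := Measure.isProbabilityMeasure_map hrowm.aemeasurable
  have hmul : ∀ R₀ : SOd d, Measurable (fun R : SOd d => R * R₀) := by
    intro R₀
    apply Measurable.subtype_mk
    apply measurable_pi_lambda
    intro i
    apply measurable_pi_lambda
    intro j
    simp only [Matrix.mul_apply]
    apply Finset.measurable_sum
    intro k _
    apply Measurable.mul_const
    exact (measurable_pi_apply k).comp ((measurable_pi_apply i).comp measurable_subtype_coe)
  have hvm : ∀ R₀ : SOd d, Measurable
      (fun w : Fin d → ℝ => Matrix.vecMul w (R₀ : Matrix (Fin d) (Fin d) ℝ)) := by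
    intro R₀
    apply Continuous.measurable
    unfold Matrix.vecMul dotProduct
    fun_prop
  have hinv : ∀ (R : SOd d) (S : Set (Fin d → ℝ)), MeasurableSet S →
      (μ.map row) {w | Matrix.vecMul w (R : Matrix (Fin d) (Fin d) ℝ) ∈ S} = (μ.map row) S := by
    intro R S hS
    have h1 : MeasurableSet {w | Matrix.vecMul w (R : Matrix (Fin d) (Fin d) ℝ) ∈ S} := hvm R hS
    rw [Measure.map_apply hrowm h1, Measure.map_apply hrowm hS]
    conv_rhs => rw [← hμright R]
    rw [Measure.map_apply (hmul R) (hrowm hS)]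
    rfl
  have hne : ∀ᵐ w ∂(μ.map row), w ≠ 0 := by
    have hms : MeasurableSet {w : Fin d → ℝ | w ≠ 0} := (measurableSet_singleton 0).compl
    rw [ae_map_iff hrowm.aemeasurable hms]
    refine Eventually.of_forall fun R h => ?_
    have h1 := (Matrix.mem_specialOrthogonalGroup_iff.1 R.2).2
    rw [Matrix.det_eq_zero_of_row_eq_zero (⟨d - 1, by omega⟩ : Fin d) (fun j => congrFun h j)] at h1
    exact zero_ne_one h1
  have hin : ∀ x y : EuclideanSpace ℝ (Fin d), ⟪x, y⟫ = x.ofLp ⬝ᵥ y.ofLp := by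
    intro x y
    simp [PiLp.inner_apply, dotProduct, mul_comm]
  have hun : n.ofLp ⬝ᵥ n.ofLp = 1 := by
    rw [← hin, real_inner_self_eq_norm_sq, hn]; norm_num
  have hum : m.ofLp ⬝ᵥ m.ofLp = 1 := by
    rw [← hin, real_inner_self_eq_norm_sq, hm]; norm_num
  have key := main_nu hd (μ.map row) hinv hne n.ofLp m.ofLp hun hum
  rw [hin, ← key, Measure.map_apply hrowm]
  · congr 1
    ext R
    have hd0 : 0 < d := by omega
    simp [lastCoord, hd0, rot, rotAct, hrow, Matrix.mulVec]
    rfl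
  · apply IsOpen.measurableSet
    apply isOpen_lt
    · unfold dotProduct; fun_prop
    · fun_prop
end
end

section
/- For every θ ∈ [0, π], it holds θ·cos(θ/2) + (π − θ)·sin(θ/2) ≤ (1 + π/2)·sin θ. -/
open Real

/-- Chord bound for `x / sin x` on `[0, π/2]`. -/
theorem chord_aux (x : ℝ) (h0 : 0 ≤ x) (h1 : x ≤ π / 2) :
    x ≤ Real.sin x * (1 + (1 - 2 / π) * x) := by
  have hp := Real.pi_gt_d2
  have hp2 := Real.pi_lt_d2
  obtain ⟨d, hd⟩ : ∃ d, d = 2 / π := ⟨_, rfl⟩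
  rw [← hd]
  have hdp : d * π = 2 := by rw [hd]; field_simp
  have hd1 : 0.63 ≤ d := by nlinarith
  have hd2 : d ≤ 0.64 := by nlinarith
  have hpos : 0 ≤ 1 + (1 - d) * x := by nlinarith
  rcases le_total x 1 with hx | hx
  · have hs : x - x ^ 3 / 6 ≤ Real.sin x := by
      exact Real.sin_ge_sub_cube h0
    have h2 := mul_le_mul_of_nonneg_right hs hpos
    have h3 : 0 ≤ (1 - d) * (1 - x ^ 2 / 6) - x / 6 := by
      nlinarith
    nlinarith [mul_nonneg (mul_nonneg h0 h0) h3]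
  · obtain ⟨y, hy⟩ : ∃ y, y = π / 2 - x := ⟨_, rfl⟩
    have hs : 1 - y ^ 2 / 2 ≤ Real.sin x := by
      have := Real.one_sub_sq_div_two_le_cos (x := y)
      rwa [hy, Real.cos_pi_div_two_sub, ← hy] at this
    have h2 := mul_le_mul_of_nonneg_right hs hpos
    have e : 1 + (1 - d) * x = π / 2 - (1 - d) * y := by
      rw [hy]; linear_combination (-1 / 2) * hdp
    have hy0 : 0 ≤ y := by linarith
    have hy1 : y ≤ 0.6 := by linarith
    have h3 : 0 ≤ d - y / 2 * (π / 2 - (1 - d) * y) := by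
      nlinarith [mul_nonneg (mul_nonneg hy0 hy0) (by linarith : 0 ≤ 1 - d)]
    have h4 := mul_nonneg hy0 h3
    rw [e] at h2 ⊢
    have : x = π / 2 - y := by linarith
    nlinarith

theorem trig_inequality_jump_constant :
    ∀ θ ∈ Set.Icc (0 : ℝ) π,
      θ * Real.cos (θ / 2) + (π - θ) * Real.sin (θ / 2) ≤ (1 + π / 2) * Real.sin θ := by
  rintro θ ⟨h0, h1⟩
  have a := chord_aux (θ / 2) (by linarith) (by linarith)
  have b := chord_aux (π / 2 - θ / 2) (by linarith) (by linarith)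
  rw [Real.sin_pi_div_two_sub] at b
  have hs : 0 ≤ Real.sin (θ / 2) := Real.sin_nonneg_of_nonneg_of_le_pi (by linarith) (by linarith)
  have hc : 0 ≤ Real.cos (θ / 2) := Real.cos_nonneg_of_neg_pi_div_two_le_of_le (by linarith) (by linarith)
  have e : Real.sin θ = 2 * Real.sin (θ / 2) * Real.cos (θ / 2) := by
    rw [← Real.sin_two_mul]; congr 1; ring
  rw [e]
  have a' := mul_le_mul_of_nonneg_right a hc
  have b' := mul_le_mul_of_nonneg_right b hs
  have hdp : 2 / π * π = 2 := by field_simp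
  linear_combination 2 * a' + 2 * b' - Real.sin (θ / 2) * Real.cos (θ / 2) * hdp
end

section
/- Let d ≥ 2, N ≥ 1, let Ω ⊆ ℝ^N be a Lebesgue-measurable set and let Q : Ω → ℝ^{d×d} be a Lebesgue-measurable matrix-valued map such that for every x ∈ Ω there exists a unit vector v ∈ S^{d-1} with Q(x) = v ⊗ v. Then there exists a Lebesgue-measurable map n : Ω → S^{d-1} with Q(x) = n(x) ⊗ n(x) for every x ∈ Ω. -/
/-!
STATEMENT 19: measurable selection of an orientation: a measurable map Q on a
Lebesgue-measurable set Ω ⊆ ℝ^N whose values are rank-one projections v⊗v (v a unit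
vector) admits a measurable unit-vector field n with Q = n⊗n on Ω. This is the
measurable backbone of the lifting Theorem 1.2 of the paper.
-/

noncomputable section
open MeasureTheory

theorem measurable_orientation_selection
    (N d : ℕ) (hN : 1 ≤ N) (hd : 2 ≤ d)
    (Ω : Set (EuclideanSpace ℝ (Fin N))) (hΩ : MeasurableSet Ω)
    (Q : Ω → Fin d → Fin d → ℝ) (hQ : Measurable Q)
    (hQval : ∀ x : Ω, ∃ v : EuclideanSpace ℝ (Fin d), ‖v‖ = 1 ∧
      ∀ i j, Q x i j = v i * v j) :
    ∃ n : Ω → EuclideanSpace ℝ (Fin d), Measurable n ∧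
      ∀ x : Ω, ‖n x‖ = 1 ∧ ∀ i j, Q x i j = n x i * n x j := by
  classical
  have hm : ∀ i j, Measurable fun x => Q x i j := fun i j =>
    (measurable_pi_apply j).comp ((measurable_pi_apply i).comp hQ)
  -- `P x k`: `k` is the first index whose diagonal entry does not vanish
  let P : Ω → Fin d → Prop := fun x k => Q x k k ≠ 0 ∧ ∀ j, j < k → Q x j j = 0
  let f : Ω → Fin d → ℝ := fun x i =>
    ∑ k, if P x k then Q x k i / Real.sqrt (Q x k k) else 0
  have hP : ∀ k, MeasurableSet {x | P x k} := by
    intro k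
    have h0 : ∀ j, MeasurableSet {x | Q x j j = 0} := fun j =>
      hm j j (measurableSet_singleton 0)
    have : {x | P x k} = {x | Q x k k = 0}ᶜ ∩ ⋂ j, ⋂ (_ : j < k), {x | Q x j j = 0} := by
      ext x
      simp [P]
    rw [this]
    exact (h0 k).compl.inter
      (MeasurableSet.iInter fun j => MeasurableSet.iInter fun _ => h0 j)
  have hf : Measurable f := by
    refine measurable_pi_lambda _ fun i => ?_
    refine Finset.measurable_sum _ fun k _ => ?_
    exact Measurable.ite (hP k) ((hm k i).div (hm k k).sqrt) measurable_const
  refine ⟨fun x => WithLp.toLp 2 (f x), (WithLp.measurable_toLp 2 _).comp hf, fun x => ?_⟩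
  obtain ⟨v, hv, hQv⟩ := hQval x
  have hex : ∃ k, Q x k k ≠ 0 := by
    by_contra! h
    have : v = 0 := by
      ext i
      have := h i
      rw [hQv] at this
      simpa using this
    simp [this] at hv
  obtain ⟨k, hk, hmin⟩ : ∃ k, P x k := by
    obtain ⟨k, hk, hmin⟩ := WellFounded.has_min (wellFounded_lt (α := Fin d))
      {k | Q x k k ≠ 0} hex
    refine ⟨k, hk, fun j hj => ?_⟩
    by_contra h
    exact hmin j h hj
  have huniq : ∀ l, l ≠ k → ¬ P x l := by
    rintro l hl ⟨h1, h2⟩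
    rcases lt_or_gt_of_ne hl with h | h
    · exact h1 (hmin l h)
    · exact hk (h2 k h)
  have hfx : ∀ i, f x i = v k * v i / |v k| := by
    intro i
    have : f x i = if P x k then Q x k i / Real.sqrt (Q x k k) else 0 :=
      Finset.sum_eq_single k (fun l _ hl => if_neg (huniq l hl)) (by simp)
    rw [this, if_pos ⟨hk, hmin⟩, hQv, hQv, Real.sqrt_mul_self_eq_abs]
  have hvk : v k ≠ 0 := by
    intro h
    exact hk (by rw [hQv, h, mul_zero])
  have hs : WithLp.toLp 2 (f x) = v ∨ WithLp.toLp 2 (f x) = -v := by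
    rcases lt_or_gt_of_ne hvk with h | h
    · right
      ext i
      simp only [hfx, abs_of_neg h, PiLp.neg_apply]
      field_simp
    · left
      ext i
      simp only [hfx, abs_of_pos h]
      field_simp
  change ‖WithLp.toLp 2 (f x)‖ = 1 ∧ ∀ i j, Q x i j =
    (WithLp.toLp 2 (f x) : EuclideanSpace ℝ (Fin d)) i *
      (WithLp.toLp 2 (f x) : EuclideanSpace ℝ (Fin d)) j
  rcases hs with h | h <;> rw [h]
  · exact ⟨hv, hQv⟩
  · refine ⟨by rw [norm_neg, hv], fun i j => ?_⟩
    rw [hQv, PiLp.neg_apply, PiLp.neg_apply, neg_mul_neg]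
end
end
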